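/- arXiv:2305.11296 — 5 statements merged into one kernel-verified Lean document; each statement's English description precedes it below -/
import Mathlib

section
/- Participatory budgeting with unit-cost projects and singleton groups is not strategyproof when the funding constraints are not 1-laminar: for every finite project set P and subsets P_{l1}, P_{l2} ⊆ P with P_{l1} ∩ P_{l2} ≠ ∅, P_{l1} \ P_{l2} ≠ ∅, and P_{l2} \ P_{l1} ≠ ∅, there exist a budget B, minimum/maximum funding bounds on the labels, a number of voters n, truthful approval sets T_1, …, T_n, a voter i, a deviating report S_i', a valid outcome Q maximizing reported social welfare among valid outcomes under the truthful profile, and a valid outcome Q' maximizing reported social welfare among valid outcomes under the profile where i reports S_i' and others report truthfully, such that |Q' ∩ T_i| > |Q ∩ T_i|. -/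
/-!
Knapsack voting with unit-cost projects and singleton groups is not strategyproof
when the funding constraints are not 1-laminar.
-/

open Finset

/-!
Pick `a ∈ P₁ \ P₂`, `b ∈ P₂ \ P₁` and `c ∈ P₁ ∩ P₂`, and cap both labels at one project: then `c`
excludes both `a` and `b`, while `a` and `b` are compatible. If two voters approve `c` and a third
approves only `a`, then `c` wins with welfare `2`. By falsely adding `b` to the report, the third
voter lifts `{a, b}` to welfare `2` as well. Since any outcome contains at most one of `a, c` and at
most one of `b, c`, this is optimal, and it funds `a`.
-/

section Model

variable {α ι κ : Type*} [DecidableEq α]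

/-- An outcome `R` satisfying the budget `B` and the funding bounds on every label set `P l`;
projects have unit cost, so only cardinalities matter. -/
def IsValidOutcome (B : ℕ) (Bmin Bmax : ι → ℕ) (P : ι → Finset α) (R : Finset α) : Prop :=
  #R ≤ B ∧ ∀ l, Bmin l ≤ #(R ∩ P l) ∧ #(R ∩ P l) ≤ Bmax l

/-- The reported social welfare of an outcome `R`: the overlap utility `#(R ∩ S j)` summed over the
voters `j`, where `S j` is the reported approval set of `j`. -/
def reportedWelfare [Fintype κ] (S : κ → Finset α) (R : Finset α) : ℕ :=
  ∑ j, #(R ∩ S j)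

/-- A valid outcome of maximal reported social welfare, i.e. a possible result of knapsack voting
on the profile `S`. Ties are not broken, so there may be several. -/
def IsOptimalOutcome [Fintype κ] (B : ℕ) (Bmin Bmax : ι → ℕ) (P : ι → Finset α)
    (S : κ → Finset α) (Q : Finset α) : Prop :=
  IsValidOutcome B Bmin Bmax P Q ∧
    ∀ R, IsValidOutcome B Bmin Bmax P R → reportedWelfare S R ≤ reportedWelfare S Q

end Model

section Optimality

variable {α ι : Type*} [DecidableEq α] {B : ℕ} {Bmin Bmax : ι → ℕ} {P : ι → Finset α}
  {l l₁ l₂ : ι} {R S S₁ S₂ T : Finset α}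

theorem IsValidOutcome.card_inter_add_card_inter_le (hR : IsValidOutcome B Bmin Bmax P R)
    (hST : Disjoint S T) (hS : S ⊆ P l) (hT : T ⊆ P l) :
    #(R ∩ S) + #(R ∩ T) ≤ Bmax l :=
  calc #(R ∩ S) + #(R ∩ T)
    _ = #(R ∩ (S ∪ T)) := by
      rw [inter_union_distrib_left,
        card_union_of_disjoint (hST.mono inter_subset_right inter_subset_right)]
    _ ≤ #(R ∩ P l) := card_le_card (inter_subset_inter_left (union_subset hS hT))
    _ ≤ Bmax l := (hR.2 l).2

theorem reportedWelfare_one_against_two (S T R : Finset α) :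
    reportedWelfare ![S, T, T] R = #(R ∩ S) + 2 * #(R ∩ T) := by
  simp only [reportedWelfare, Fin.sum_univ_three, Matrix.cons_val]
  ring

theorem IsValidOutcome.isOptimalOutcome_of_majority (hT : IsValidOutcome B Bmin Bmax P T)
    (hST : Disjoint S T) (hSl : S ⊆ P l) (hTl : T ⊆ P l) (hmax : Bmax l ≤ #T) :
    IsOptimalOutcome B Bmin Bmax P ![S, T, T] T := by
  refine ⟨hT, fun R hR => ?_⟩
  have hRST : #(R ∩ S) + #(R ∩ T) ≤ #T :=
    (hR.card_inter_add_card_inter_le hST hSl hTl).trans hmax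
  have hRT : #(R ∩ T) ≤ #T := card_le_card inter_subset_right
  simp only [reportedWelfare_one_against_two, inter_self]
  omega

theorem IsValidOutcome.isOptimalOutcome_union (hS : IsValidOutcome B Bmin Bmax P (S₁ ∪ S₂))
    (hS₁S₂ : Disjoint S₁ S₂) (hS₁T : Disjoint S₁ T) (hS₂T : Disjoint S₂ T)
    (hS₁ : S₁ ⊆ P l₁) (hS₂ : S₂ ⊆ P l₂) (hT₁ : T ⊆ P l₁) (hT₂ : T ⊆ P l₂)
    (hmax₁ : Bmax l₁ ≤ #S₁) (hmax₂ : Bmax l₂ ≤ #S₂) :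
    IsOptimalOutcome B Bmin Bmax P ![S₁ ∪ S₂, T, T] (S₁ ∪ S₂) := by
  refine ⟨hS, fun R hR => ?_⟩
  have hR₁ : #(R ∩ S₁) + #(R ∩ T) ≤ #S₁ :=
    (hR.card_inter_add_card_inter_le hS₁T hS₁ hT₁).trans hmax₁
  have hR₂ : #(R ∩ S₂) + #(R ∩ T) ≤ #S₂ :=
    (hR.card_inter_add_card_inter_le hS₂T hS₂ hT₂).trans hmax₂
  have hRS : #(R ∩ (S₁ ∪ S₂)) ≤ #(R ∩ S₁) + #(R ∩ S₂) := by
    rw [inter_union_distrib_left]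
    exact card_union_le _ _
  simp only [reportedWelfare_one_against_two, inter_self, card_union_of_disjoint hS₁S₂]
  omega

end Optimality

section Witness

variable {α ι : Type*} [DecidableEq α]

/-- Upper funding bounds permitting `{a, b}` and all singletons, but little else: a label that
separates `a` from `b` is capped at one project, so whichever of the two it contains excludes all
its other projects. -/
def conflictBound (P : ι → Finset α) (a b : α) (l : ι) : ℕ :=
  max 1 #(({a} ∪ {b}) ∩ P l)

variable {P : ι → Finset α} {a b : α} {l : ι}

theorem conflictBound_comm : conflictBound P a b = conflictBound P b a := by
  ext
  rw [conflictBound, conflictBound, union_comm]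

theorem conflictBound_eq_one (hb : b ∉ P l) : conflictBound P a b l = 1 := by
  rw [conflictBound, union_inter_distrib_right, singleton_inter_of_notMem hb, union_empty]
  exact max_eq_left (card_le_card inter_subset_left)

theorem isValidOutcome_singleton (c : α) :
    IsValidOutcome 2 (fun _ => 0) (conflictBound P a b) P {c} :=
  ⟨by simp, fun _ => ⟨Nat.zero_le _, (card_le_card inter_subset_left).trans (le_max_left 1 _)⟩⟩

theorem isValidOutcome_pair :
    IsValidOutcome 2 (fun _ => 0) (conflictBound P a b) P ({a} ∪ {b}) :=
  ⟨card_union_le _ _, fun _ => ⟨Nat.zero_le _, le_max_right _ _⟩⟩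

end Witness

theorem knapsack_not_strategyproof_of_non_laminar_general
    {α ι : Type*} [DecidableEq α] (P : ι → Finset α) {l₁ l₂ : ι}
    (hint : (P l₁ ∩ P l₂).Nonempty)
    (hd₁ : (P l₁ \ P l₂).Nonempty)
    (hd₂ : (P l₂ \ P l₁).Nonempty) :
    ∃ (B : ℕ) (Bmin Bmax : ι → ℕ) (n : ℕ) (T : Fin n → Finset α) (i : Fin n)
      (S' : Finset α) (Q Q' : Finset α),
      0 < B ∧ (∀ l, Bmin l ≤ Bmax l) ∧ (∀ j, #(T j) ≤ B) ∧ #S' ≤ B ∧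
      IsOptimalOutcome B Bmin Bmax P T Q ∧
      IsOptimalOutcome B Bmin Bmax P (Function.update T i S') Q' ∧
      #(Q ∩ T i) < #(Q' ∩ T i) := by
  obtain ⟨c, hc⟩ := hint
  obtain ⟨a, ha⟩ := hd₁
  obtain ⟨b, hb⟩ := hd₂
  obtain ⟨hc₁, hc₂⟩ := mem_inter.1 hc
  obtain ⟨ha₁, ha₂⟩ := mem_sdiff.1 ha
  obtain ⟨hb₂, hb₁⟩ := mem_sdiff.1 hb
  have hab : Disjoint ({a} : Finset α) {b} :=
    disjoint_singleton.2 (ne_of_mem_of_not_mem ha₁ hb₁)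
  have hac : Disjoint ({a} : Finset α) {c} :=
    disjoint_singleton.2 (ne_of_mem_of_not_mem hc₂ ha₂).symm
  have hbc : Disjoint ({b} : Finset α) {c} :=
    disjoint_singleton.2 (ne_of_mem_of_not_mem hc₁ hb₁).symm
  have hmax₁ : conflictBound P a b l₁ ≤ 1 := (conflictBound_eq_one hb₁).le
  have hmax₂ : conflictBound P a b l₂ ≤ 1 := by rw [conflictBound_comm, conflictBound_eq_one ha₂]
  rw [← singleton_subset_iff] at ha₁ hb₂ hc₁ hc₂
  refine ⟨2, fun _ => 0, conflictBound P a b, 3, ![{a}, {c}, {c}], 0, {a} ∪ {b}, {c}, {a} ∪ {b},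
    two_pos, fun _ => Nat.zero_le _, fun j => ?_, card_union_le _ _, ?_, ?_, ?_⟩
  · fin_cases j <;> simp
  · exact (isValidOutcome_singleton c).isOptimalOutcome_of_majority hac ha₁ hc₁ hmax₁
  · have hupdate : Function.update ![({a} : Finset α), {c}, {c}] 0 ({a} ∪ {b}) =
        ![{a} ∪ {b}, {c}, {c}] := Fin.update_cons_zero _ _ _
    rw [hupdate]
    exact isValidOutcome_pair.isOptimalOutcome_union hab hac hbc ha₁ hb₂ hc₁ hc₂ hmax₁ hmax₂
  · simp [disjoint_iff_inter_eq_empty.1 hac.symm]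

/-- For every finite project set and every pair of label sets
`P₁, P₂` witnessing non-1-laminarity (`P₁ ∩ P₂ ≠ ∅`, `P₁ \ P₂ ≠ ∅`, `P₂ \ P₁ ≠ ∅`),
there are a budget, funding bounds, a profile of truthful approval sets, a voter `i`,
a deviating report, and social-welfare-maximizing valid outcomes `Q` (truthful profile)
and `Q'` (deviated profile) with `|Q' ∩ T i| > |Q ∩ T i|`. -/
theorem knapsack_not_strategyproof_of_non_laminar
    {α : Type*} [Fintype α] [DecidableEq α]
    (P₁ P₂ : Finset α)
    (hint : (P₁ ∩ P₂).Nonempty)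
    (hd₁ : (P₁ \ P₂).Nonempty)
    (hd₂ : (P₂ \ P₁).Nonempty) :
    ∃ (B : ℕ) (Bmin Bmax : Fin 2 → ℕ) (n : ℕ) (T : Fin n → Finset α) (i : Fin n)
      (S' : Finset α) (Q Q' : Finset α),
      0 < B ∧ (∀ l, Bmin l ≤ Bmax l) ∧
      (∀ j, (T j).card ≤ B) ∧ S'.card ≤ B ∧
      -- `Valid` outcomes for the (non-laminar) labelling `Pl 0 = P₁`, `Pl 1 = P₂`
      (let Pl : Fin 2 → Finset α := ![P₁, P₂]
       let Valid : Finset α → Prop := fun R =>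
         R.card ≤ B ∧ ∀ l, Bmin l ≤ (R ∩ Pl l).card ∧ (R ∩ Pl l).card ≤ Bmax l
       -- `Q` maximizes reported social welfare among valid outcomes, truthful profile
       (Valid Q ∧ ∀ R, Valid R →
          (∑ j, (R ∩ T j).card) ≤ ∑ j, (Q ∩ T j).card) ∧
       -- `Q'` maximizes reported social welfare among valid outcomes when `i` reports `S'`
       (Valid Q' ∧ ∀ R, Valid R →
          (∑ j, (R ∩ Function.update T i S' j).card) ≤
            ∑ j, (Q' ∩ Function.update T i S' j).card) ∧
       -- profitable deviation for voter `i`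
       (Q ∩ T i).card < (Q' ∩ T i).card) :=
  knapsack_not_strategyproof_of_non_laminar_general ![P₁, P₂] (l₁ := 0) (l₂ := 1) hint hd₁ hd₂
end

section
/- PBPI is not strategyproof even with unit-cost projects: there exist a finite set of unit-cost projects partitioned into groups, a budget B, a number of voters n, a truthful vote profile (fund allocations, approval sets, and complementarity answers), a voter i, and a deviating vote for voter i, such that the social-welfare-maximizing outcome among sets of at most B projects is unique under the truthful profile and unique under the deviated profile, and voter i's utility (computed from i's truthful vote) at the deviated-profile optimum strictly exceeds voter i's utility at the truthful-profile optimum. -/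
/-!
PBPI is not strategyproof even with unit-cost projects (with complementarity
interactions allowed).
-/

open Finset

/-- The PBPI utility of a voter with fund allocations `f`, approval sets `s`, and
complementarity answers `t` from the outcome `Q` (unit-cost projects). -/
def pbpiUtil {α : Type*} [DecidableEq α] {r : ℕ} (f : Fin r → ℕ)
    (s : Fin r → Finset α) (t : Fin r → Bool) (Q : Finset α) : ℕ :=
  ∑ g, if t g then (if s g ⊆ Q then min (f g) ((Q ∩ s g).card) else 0)
    else min (f g) ((Q ∩ s g).card)

/-!
One voter likes every project of a set `A`, another wants all of an equally large disjoint set `C`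
or nothing, and the budget pays for exactly one of the two sets. The second voter allocates less
than the whole budget to `C`, but more than the first voter truthfully allocates to `A`, so `C` wins
and the first voter gets nothing. By claiming to allocate the whole budget she makes `A` win.
-/

section Welfare

variable {α : Type*} [DecidableEq α] {r n : ℕ}

/-- The social welfare `U(Q)`: the sum of the utilities of all voters from the outcome `Q`. -/
def pbpiWelfare (f : Fin n → Fin r → ℕ) (s : Fin n → Fin r → Finset α) (t : Fin n → Fin r → Bool)
    (Q : Finset α) : ℕ :=
  ∑ j, pbpiUtil (f j) (s j) (t j) Q

theorem pbpiUtil_const_false (f : Fin r → ℕ) (s : Fin r → Finset α) (Q : Finset α) :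
    pbpiUtil f s (fun _ ↦ false) Q = ∑ g, min (f g) #(Q ∩ s g) := by
  simp [pbpiUtil]

theorem pbpiUtil_const_true (f : Fin r → ℕ) (s : Fin r → Finset α) (Q : Finset α) :
    pbpiUtil f s (fun _ ↦ true) Q = ∑ g, if s g ⊆ Q then min (f g) #(s g) else 0 := by
  refine sum_congr rfl fun g _ ↦ ?_
  rw [if_pos rfl]
  exact ite_congr rfl (fun hsQ ↦ by rw [inter_eq_right.mpr hsQ]) fun _ ↦ rfl

end Welfare

/-- `Q` is the only maximizer of the welfare function `w` among the outcomes that are feasible for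
unit-cost projects and budget `B`. -/
def IsUniqueOptimum {α : Type*} (B : ℕ) (w : Finset α → ℕ) (Q : Finset α) : Prop :=
  #Q ≤ B ∧ ∀ R : Finset α, #R ≤ B → R ≠ Q → w R < w Q

section Conflict

variable {α : Type*} [DecidableEq α] {a b : ℕ} {A C Q : Finset α}

/-- The social welfare when all projects form one group, voter `0` allocates `a` to the approval set
`A` without complementarity, and voter `1` allocates `b` to the approval set `C` with
complementarity. -/
def conflictWelfare (a b : ℕ) (A C : Finset α) : Finset α → ℕ :=
  pbpiWelfare (r := 1) ![fun _ ↦ a, fun _ ↦ b] ![fun _ ↦ A, fun _ ↦ C]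
    ![fun _ ↦ false, fun _ ↦ true]

theorem conflictWelfare_eq (a b : ℕ) (A C Q : Finset α) :
    conflictWelfare a b A C Q = min a #(Q ∩ A) + if C ⊆ Q then min b #C else 0 := by
  simp [conflictWelfare, pbpiWelfare, pbpiUtil_const_false, pbpiUtil_const_true]

theorem conflictWelfare_of_not_subset (hCQ : ¬C ⊆ Q) :
    conflictWelfare a b A C Q = min a #(Q ∩ A) := by
  rw [conflictWelfare_eq, if_neg hCQ, add_zero]

theorem conflictWelfare_right_of_disjoint (hAC : Disjoint A C) :
    conflictWelfare a b A C C = min b #C := by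
  simp [conflictWelfare_eq, disjoint_iff_inter_eq_empty.mp hAC.symm]

theorem isUniqueOptimum_conflictWelfare_right (hab : a < b) (hb : b ≤ #C) :
    IsUniqueOptimum #C (conflictWelfare a b A C) C := by
  refine ⟨le_rfl, fun R hR hRC ↦ ?_⟩
  have hCR : ¬C ⊆ R := fun h ↦ hRC (eq_of_subset_of_card_le h hR).symm
  calc conflictWelfare a b A C R
      = min a #(R ∩ A) := conflictWelfare_of_not_subset hCR
    _ ≤ a := min_le_left _ _
    _ < b := hab
    _ = min b #C := (min_eq_left hb).symm
    _ ≤ conflictWelfare a b A C C := by simp [conflictWelfare_eq]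

theorem isUniqueOptimum_conflictWelfare_left (hAC : Disjoint A C) (hcard : #A ≤ #C)
    (hb : b < #A) : IsUniqueOptimum #A (conflictWelfare #A b A C) A := by
  refine ⟨le_rfl, fun R hR hRA ↦ ?_⟩
  have hA : #A ≤ conflictWelfare #A b A C A := by simp [conflictWelfare_eq]
  suffices conflictWelfare #A b A C R < #A from this.trans_le hA
  by_cases hCR : C ⊆ R
  · obtain rfl : C = R := eq_of_subset_of_card_le hCR (hR.trans hcard)
    rw [conflictWelfare_right_of_disjoint hAC]
    exact (min_le_left _ _).trans_lt hb
  · have hAR : ¬A ⊆ R := fun h ↦ hRA (eq_of_subset_of_card_le h hR).symm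
    rw [conflictWelfare_of_not_subset hCR]
    exact (min_le_right _ _).trans_lt (card_lt_card (inf_lt_right.mpr hAR))

end Conflict

theorem exists_disjoint_card_eq {α : Type*} [Fintype α] {k l : ℕ} (h : k + l ≤ Fintype.card α) :
    ∃ A C : Finset α, Disjoint A C ∧ #A = k ∧ #C = l := by
  classical
  obtain ⟨A, -, hA⟩ := exists_subset_card_eq (s := (univ : Finset α)) (n := k)
    (by rw [card_univ]; omega)
  obtain ⟨C, hCA, hC⟩ := exists_subset_card_eq (s := Aᶜ) (n := l) (by rw [card_compl]; omega)
  exact ⟨A, C, subset_compl_iff_disjoint_left.mp hCA, hA, hC⟩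

theorem pbpi_not_strategyproof_general {α : Type*} [Fintype α] [DecidableEq α] {B : ℕ}
    (hB : 3 ≤ B) (hα : 2 * B ≤ Fintype.card α) :
    ∃ (f : Fin 2 → Fin 1 → ℕ) (s : Fin 2 → Fin 1 → Finset α) (t : Fin 2 → Fin 1 → Bool)
      (f' : Fin 1 → ℕ) (Q Q' : Finset α),
      (∀ j, ∑ g, f j g ≤ B) ∧ ∑ g, f' g ≤ B ∧
      IsUniqueOptimum B (pbpiWelfare f s t) Q ∧
      IsUniqueOptimum B (pbpiWelfare (Function.update f 0 f') s t) Q' ∧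
      pbpiUtil (f 0) (s 0) (t 0) Q < pbpiUtil (f 0) (s 0) (t 0) Q' := by
  obtain ⟨A, C, hAC, hA, hC⟩ := exists_disjoint_card_eq (two_mul B ▸ hα)
  have truthful : IsUniqueOptimum B (conflictWelfare 1 2 A C) C :=
    hC ▸ isUniqueOptimum_conflictWelfare_right one_lt_two (by omega)
  have deviated : IsUniqueOptimum B (conflictWelfare B 2 A C) A :=
    hA ▸ isUniqueOptimum_conflictWelfare_left hAC (by omega) (by omega)
  refine ⟨![fun _ ↦ 1, fun _ ↦ 2], ![fun _ ↦ A, fun _ ↦ C], ![fun _ ↦ false, fun _ ↦ true],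
    fun _ ↦ B, C, A, ?_, by simp, truthful, ?_, ?_⟩
  · suffices 1 ≤ B ∧ 2 ≤ B by simpa [Fin.forall_fin_two]
    omega
  · have misreport : Function.update ![fun _ : Fin 1 ↦ 1, fun _ ↦ 2] 0 (fun _ ↦ B) =
        ![fun _ ↦ B, fun _ ↦ 2] := Fin.update_cons_zero _ _ _
    rw [misreport]
    exact deviated
  · have hCA : C ∩ A = ∅ := disjoint_iff_inter_eq_empty.mp hAC.symm
    have hB0 : 0 < B := by omega
    simpa [pbpiUtil_const_false, hCA, hA]

/-- There exist unit-cost projects partitioned into groups, a budget,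
a truthful vote profile, a voter `i`, and a deviating vote for `i`, such that the
social-welfare-maximizing outcome among sets of at most `B` projects is unique under
both profiles, and `i`'s truthful utility at the deviated-profile optimum strictly
exceeds `i`'s truthful utility at the truthful-profile optimum. -/
theorem pbpi_not_strategyproof :
    ∃ (m r n B : ℕ) (z : Fin r → Finset (Fin m))
      (f : Fin n → Fin r → ℕ) (s : Fin n → Fin r → Finset (Fin m))
      (t : Fin n → Fin r → Bool)
      (i : Fin n) (f' : Fin r → ℕ) (s' : Fin r → Finset (Fin m)) (t' : Fin r → Bool)
      (Q Q' : Finset (Fin m)),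
      0 < B ∧
      -- the groups partition the project set
      (∀ g g' : Fin r, g ≠ g' → Disjoint (z g) (z g')) ∧
      (Finset.univ.biUnion z = (Finset.univ : Finset (Fin m))) ∧
      -- the truthful votes and the deviation are admissible
      (∀ j g, s j g ⊆ z g) ∧ (∀ j, ∑ g, f j g ≤ B) ∧
      (∀ g, s' g ⊆ z g) ∧ (∑ g, f' g ≤ B) ∧
      -- `Q` is the unique social-welfare maximizer under the truthful profile
      Q.card ≤ B ∧
      (∀ R : Finset (Fin m), R.card ≤ B → R ≠ Q →
        (∑ j, pbpiUtil (f j) (s j) (t j) R) < ∑ j, pbpiUtil (f j) (s j) (t j) Q) ∧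
      -- `Q'` is the unique social-welfare maximizer under the deviated profile
      Q'.card ≤ B ∧
      (∀ R : Finset (Fin m), R.card ≤ B → R ≠ Q' →
        (∑ j, pbpiUtil (Function.update f i f' j) (Function.update s i s' j)
            (Function.update t i t' j) R) <
          ∑ j, pbpiUtil (Function.update f i f' j) (Function.update s i s' j)
            (Function.update t i t' j) Q') ∧
      -- voter `i` strictly benefits (utility computed from `i`'s truthful vote)
      pbpiUtil (f i) (s i) (t i) Q < pbpiUtil (f i) (s i) (t i) Q' := by
  obtain ⟨f, s, t, f', Q, Q', hf, hf', ⟨hQ, hQ_max⟩, ⟨hQ', hQ'_max⟩, hgain⟩ :=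
    pbpi_not_strategyproof_general (α := Fin 6) (B := 3) le_rfl (by simp)
  exact ⟨6, 1, 2, 3, fun _ ↦ univ, f, s, t, 0, f', s 0, t 0, Q, Q', three_pos,
    fun g g' hne ↦ (hne (Subsingleton.elim g g')).elim, by simp, fun _ _ ↦ subset_univ _, hf,
    fun _ ↦ subset_univ _, hf', hQ, hQ_max, hQ',
    by simpa only [Function.update_eq_self, pbpiWelfare] using hQ'_max, hgain⟩
end

section
/- PBPI is not strategyproof under unit-cost projects even when only substitution interactions are allowed (all complementarity answers are 0): there exist a finite set of unit-cost projects partitioned into groups, a budget B, a truthful vote profile with t_g^i = 0 for all voters and groups, a voter i, a deviating vote for voter i (also with all complementarity answers 0), a feasible outcome Q maximizing reported social welfare under the truthful profile, and a feasible outcome Q' maximizing reported social welfare under the deviated profile, such that voter i's utility computed from i's truthful vote satisfies u_i(Q') > u_i(Q). -/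
/-!
PBPI is not strategyproof under unit-cost projects even when only substitution
interactions are allowed (all complementarity answers are 0).
-/

open Finset

/-- The overlap utility of a voter with fund allocations `f` and approval sets `s`
(no complementarity) from the outcome `Q`, with unit-cost projects. -/
def overlapUtil {α : Type*} [DecidableEq α] {r : ℕ} (f : Fin r → ℕ)
    (s : Fin r → Finset α) (Q : Finset α) : ℕ :=
  ∑ g, min (f g) ((Q ∩ s g).card)

/-!
Place six projects of a single group around a hexagon and let `B = 3`. One voter per edge approves
the two endpoints of that edge, one voter approves only project `0`, one only project `2`, and the
manipulator only project `1`; everyone allocates one unit. The only triples that satisfy all six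
edge voters are the even and the odd one, and the two extra voters make the even triple the unique
winner. By overstating the allocation to three units and approving the whole odd triple,
the manipulator makes the odd triple, which contains project `1`, the unique winner.

Unique winners `Q` and `Q'` require `B ≥ 3`: the misreport must reverse a strict welfare comparison
of integers although `Q'` is already ahead by one in the truthful utility, so the reported
utilities of `Q'` and `Q` differ by at least `3`.
-/

section Voting

variable {α ι : Type*} [DecidableEq α] [Fintype ι] {r : ℕ}

theorem overlapUtil_fin_one (f : Fin 1 → ℕ) (s : Fin 1 → Finset α) (Q : Finset α) :
    overlapUtil f s Q = min (f 0) #(Q ∩ s 0) :=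
  Fin.sum_univ_one _

/-- The reported social welfare `U(Q)` of the outcome `Q` when voter `j` reports the fund
allocations `f j` and the approval sets `s j`. -/
def socialWelfare (f : ι → Fin r → ℕ) (s : ι → Fin r → Finset α) (Q : Finset α) : ℕ :=
  ∑ j, overlapUtil (f j) (s j) Q

/-- `Q` is the only feasible outcome of maximal reported social welfare, so that it is selected
under every tie-breaking rule. -/
structure IsUniqueWinner (B : ℕ) (f : ι → Fin r → ℕ) (s : ι → Fin r → Finset α)
    (Q : Finset α) : Prop where
  card_le : #Q ≤ B
  welfare_lt : ∀ R : Finset α, #R ≤ B → R ≠ Q → socialWelfare f s R < socialWelfare f s Q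

theorem IsUniqueWinner.welfare_le {B : ℕ} {f : ι → Fin r → ℕ} {s : ι → Fin r → Finset α}
    {Q : Finset α} (hQ : IsUniqueWinner B f s Q) (R : Finset α) (hR : #R ≤ B) :
    socialWelfare f s R ≤ socialWelfare f s Q := by
  obtain rfl | hne := eq_or_ne R Q
  · exact le_rfl
  · exact (hQ.welfare_lt R hR hne).le

theorem socialWelfare_update_add [DecidableEq ι] (f : ι → Fin r → ℕ)
    (s : ι → Fin r → Finset α) (i : ι) (f' : Fin r → ℕ) (s' : Fin r → Finset α)
    (Q : Finset α) :
    socialWelfare (Function.update f i f') (Function.update s i s') Q + overlapUtil (f i) (s i) Q =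
      socialWelfare f s Q + overlapUtil f' s' Q := by
  have others_unchanged :
      ∑ j ∈ univ.erase i, overlapUtil (Function.update f i f' j) (Function.update s i s' j) Q =
        ∑ j ∈ univ.erase i, overlapUtil (f j) (s j) Q :=
    sum_congr rfl fun j hj => by simp only [Function.update_of_ne (ne_of_mem_erase hj)]
  simp only [socialWelfare, ← add_sum_erase univ _ (mem_univ i), others_unchanged,
    Function.update_self]
  ring

end Voting

theorem card_inter_add_card_inter_of_disjoint {α : Type*} [DecidableEq α] (R : Finset α)
    {S T : Finset α} (hST : Disjoint S T) : #(R ∩ S) + #(R ∩ T) = #(R ∩ (S ∪ T)) := by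
  rw [inter_union_distrib_left,
    card_union_of_disjoint (hST.mono inter_subset_right inter_subset_right)]

section EdgesHit

variable {α : Type*} [Fintype α] [DecidableEq α]

/-- The number of edges `{a, σ a}` that meet `R`, in the graph whose edges, indexed by `a`, join
each point to its image under the permutation `σ`. -/
def edgesHit (σ : Equiv.Perm α) (R : Finset α) : ℕ :=
  #{a | a ∈ R ∨ σ a ∈ R}

theorem sum_min_one_card_inter_pair (σ : Equiv.Perm α) (R : Finset α) :
    ∑ a, min 1 #(R ∩ {a, σ a}) = edgesHit σ R := by
  rw [edgesHit, card_filter]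
  refine sum_congr rfl fun a _ => ?_
  split_ifs with h
  · have hit : (R ∩ {a, σ a}).Nonempty := by
      obtain ha | ha := h
      · exact ⟨a, by simp [ha]⟩
      · exact ⟨σ a, by simp [ha]⟩
    exact min_eq_left hit.card_pos
  · have missed : R ∩ {a, σ a} = ∅ := by
      rw [← disjoint_iff_inter_eq_empty]
      simpa using h
    simp [missed]

theorem edgesHit_le_card (σ : Equiv.Perm α) (R : Finset α) : edgesHit σ R ≤ Fintype.card α :=
  card_le_univ _

theorem edgesHit_add_card_filter (σ : Equiv.Perm α) (R : Finset α) :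
    edgesHit σ R + #{a ∈ R | σ a ∈ R} = 2 * #R := by
  have card_preimage : #{a | σ a ∈ R} = #R :=
    card_equiv σ fun a => by simp
  have hit_twice_eq_inter : {a ∈ R | σ a ∈ R} = R ∩ univ.filter (σ · ∈ R) := by
    rw [inter_filter, inter_univ]
  rw [edgesHit, filter_or, filter_univ_mem, hit_twice_eq_inter, card_union_add_card_inter,
    card_preimage, two_mul]

theorem apply_mem_iff_notMem_of_edgesHit_eq_card {σ : Equiv.Perm α} {R : Finset α}
    (hcard : 2 * #R ≤ Fintype.card α) (hhit : edgesHit σ R = Fintype.card α) (a : α) :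
    σ a ∈ R ↔ a ∉ R := by
  have a_hit : a ∈ R ∨ σ a ∈ R :=
    filter_eq_self.mp ((card_eq_iff_eq_univ _).mp hhit) a (mem_univ a)
  have none_hit_twice : {a ∈ R | σ a ∈ R} = ∅ := by
    have double_count := edgesHit_add_card_filter σ R
    exact card_eq_zero.mp (by omega)
  have a_not_hit_twice : a ∈ R → σ a ∉ R := fun ha => filter_eq_empty_iff.mp none_hit_twice ha
  tauto

end EdgesHit

theorem eq_even_or_eq_odd_of_edgesHit_finRotate {R : Finset (Fin 6)} (hcard : #R ≤ 3)
    (hhit : edgesHit (finRotate 6) R = 6) : R = {0, 2, 4} ∨ R = {1, 3, 5} := by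
  have alternating (a : Fin 6) : a + 1 ∈ R ↔ a ∉ R := by
    rw [← finRotate_apply]
    exact apply_mem_iff_notMem_of_edgesHit_eq_card (by simp; omega) (by simpa using hhit) a
  have h1 : 1 ∈ R ↔ 0 ∉ R := alternating 0
  have h2 : 2 ∈ R ↔ 1 ∉ R := alternating 1
  have h3 : 3 ∈ R ↔ 2 ∉ R := alternating 2
  have h4 : 4 ∈ R ↔ 3 ∉ R := alternating 3
  have h5 : 5 ∈ R ↔ 4 ∉ R := alternating 4
  by_cases h0 : 0 ∈ R
  · left
    ext a
    fin_cases a <;> simp [*]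
  · right
    ext a
    fin_cases a <;> simp [*]

theorem edgesHit_finRotate_le_five {R : Finset (Fin 6)} (hcard : #R ≤ 3)
    (heven : R ≠ {0, 2, 4}) (hodd : R ≠ {1, 3, 5}) : edgesHit (finRotate 6) R ≤ 5 := by
  have hle : edgesHit (finRotate 6) R ≤ 6 := by simpa using edgesHit_le_card (finRotate 6) R
  have hne : edgesHit (finRotate 6) R ≠ 6 := fun hhit =>
    (eq_even_or_eq_odd_of_edgesHit_finRotate hcard hhit).elim heven hodd
  omega

/-- The truthful approval sets, in a single group: voters `0, …, 5` are the edges of the hexagon,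
voters `6` and `7` support the even triple, and voter `8` is the manipulator. -/
def hexagonApprovals : Fin (6 + 3) → Fin 1 → Finset (Fin 6) :=
  fun j _ => Fin.append (fun a => {a, finRotate 6 a}) ![{0}, {2}, {1}] j

theorem socialWelfare_hexagonApprovals (R : Finset (Fin 6)) :
    socialWelfare (fun _ _ => 1) hexagonApprovals R =
      edgesHit (finRotate 6) R + (#(R ∩ {0, 2}) + #(R ∩ {1})) := by
  have min_one_card_inter_singleton (a : Fin 6) : min 1 #(R ∩ {a}) = #(R ∩ {a}) :=
    min_eq_right (card_le_card inter_subset_right)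
  have supporters : #(R ∩ {0}) + #(R ∩ {2}) = #(R ∩ {0, 2}) := by
    rw [insert_eq, card_inter_add_card_inter_of_disjoint R (by decide)]
  simp only [socialWelfare, overlapUtil_fin_one, hexagonApprovals, Fin.sum_univ_add,
    Fin.append_left, Fin.append_right, sum_min_one_card_inter_pair, Fin.sum_univ_three,
    Matrix.cons_val, min_one_card_inter_singleton, supporters]

theorem socialWelfare_hexagonApprovals_deviation (R : Finset (Fin 6)) :
    socialWelfare (Function.update (fun _ _ => 1) 8 fun _ => 3)
        (Function.update hexagonApprovals 8 fun _ => {1, 3, 5}) R =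
      edgesHit (finRotate 6) R + (#(R ∩ {0, 2}) + #(R ∩ {1, 3, 5})) := by
  have welfare_shift := socialWelfare_update_add (fun _ _ => 1) hexagonApprovals 8 (fun _ => 3)
    (fun _ => {1, 3, 5}) R
  have truthful_util : overlapUtil (fun _ => 1) (hexagonApprovals 8) R = #(R ∩ {1}) :=
    (overlapUtil_fin_one _ _ R).trans (min_eq_right (card_le_card inter_subset_right))
  have deviating_util :
      overlapUtil (fun _ : Fin 1 => 3) (fun _ => {1, 3, 5}) R = #(R ∩ {1, 3, 5}) :=
    (overlapUtil_fin_one _ _ R).trans (min_eq_right (card_le_card inter_subset_right))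
  rw [truthful_util, deviating_util, socialWelfare_hexagonApprovals] at welfare_shift
  omega

theorem isUniqueWinner_hexagonApprovals :
    IsUniqueWinner 3 (fun _ _ => 1) hexagonApprovals {0, 2, 4} where
  card_le := by decide
  welfare_lt R hcard hne := by
    have welfare_even : socialWelfare (fun _ _ => 1) hexagonApprovals {0, 2, 4} = 8 := by
      rw [socialWelfare_hexagonApprovals]; decide
    rw [welfare_even, socialWelfare_hexagonApprovals]
    by_cases hodd : R = {1, 3, 5}
    · subst hodd; decide
    by_cases hsub : {0, 1, 2} ⊆ R
    · obtain rfl : {0, 1, 2} = R := eq_of_subset_of_card_le hsub hcard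
      decide
    · have hits_le : edgesHit (finRotate 6) R ≤ 5 := edgesHit_finRotate_le_five hcard hne hodd
      have singles_eq : #(R ∩ {0, 2}) + #(R ∩ {1}) = #(R ∩ {0, 1, 2}) := by
        have hunion : {0, 2} ∪ {1} = ({0, 1, 2} : Finset (Fin 6)) := by decide
        rw [← hunion, card_inter_add_card_inter_of_disjoint R (by decide)]
      have singles_lt : #(R ∩ {0, 1, 2}) < 3 :=
        card_lt_card (inter_subset_right.ssubset_of_ne (mt inter_eq_right.mp hsub))
      omega

theorem isUniqueWinner_hexagonApprovals_deviation :
    IsUniqueWinner 3 (Function.update (fun _ _ => 1) 8 fun _ => 3)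
      (Function.update hexagonApprovals 8 fun _ => {1, 3, 5}) {1, 3, 5} where
  card_le := by decide
  welfare_lt R hcard hne := by
    have welfare_odd : socialWelfare (Function.update (fun _ _ => 1) 8 fun _ => 3)
        (Function.update hexagonApprovals 8 fun _ => {1, 3, 5}) {1, 3, 5} = 9 := by
      rw [socialWelfare_hexagonApprovals_deviation]; decide
    rw [welfare_odd, socialWelfare_hexagonApprovals_deviation]
    by_cases heven : R = {0, 2, 4}
    · subst heven; decide
    · have hits_le : edgesHit (finRotate 6) R ≤ 5 := edgesHit_finRotate_le_five hcard heven hne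
      have singles_le : #(R ∩ {0, 2}) + #(R ∩ {1, 3, 5}) ≤ #R := by
        rw [card_inter_add_card_inter_of_disjoint R (by decide)]
        exact card_le_card inter_subset_left
      omega

theorem overlapUtil_hexagonApprovals_even_lt_odd :
    overlapUtil (fun _ => 1) (hexagonApprovals 8) {0, 2, 4} <
      overlapUtil (fun _ => 1) (hexagonApprovals 8) {1, 3, 5} := by
  decide

theorem pbpi_not_strategyproof_substitutes_only_general :
    ∃ (m r n B : ℕ) (z : Fin r → Finset (Fin m))
      (f : Fin n → Fin r → ℕ) (s : Fin n → Fin r → Finset (Fin m))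
      (i : Fin n) (f' : Fin r → ℕ) (s' : Fin r → Finset (Fin m))
      (Q Q' : Finset (Fin m)),
      0 < B ∧
      (∀ g g' : Fin r, g ≠ g' → Disjoint (z g) (z g')) ∧
      (Finset.univ.biUnion z = (Finset.univ : Finset (Fin m))) ∧
      (∀ j g, s j g ⊆ z g) ∧ (∀ j, ∑ g, f j g ≤ B) ∧
      (∀ g, s' g ⊆ z g) ∧ (∑ g, f' g ≤ B) ∧
      IsUniqueWinner B f s Q ∧
      IsUniqueWinner B (Function.update f i f') (Function.update s i s') Q' ∧
      overlapUtil (f i) (s i) Q < overlapUtil (f i) (s i) Q' :=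
  ⟨6, 1, 6 + 3, 3, fun _ => univ, fun _ _ => 1, hexagonApprovals, 8, fun _ => 3,
    fun _ => {1, 3, 5}, {0, 2, 4}, {1, 3, 5}, by decide,
    fun _ _ hne => absurd (Subsingleton.elim _ _) hne, by simp,
    fun _ _ => subset_univ _, by simp, fun _ => subset_univ _, by simp,
    isUniqueWinner_hexagonApprovals, isUniqueWinner_hexagonApprovals_deviation,
    overlapUtil_hexagonApprovals_even_lt_odd⟩

/-- There exist unit-cost projects partitioned into groups, a budget,
a truthful profile with all complementarity answers 0, a voter `i`, a deviating vote
for `i` (again with no complementarity), a feasible outcome `Q` maximizing reported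
social welfare under the truthful profile, and a feasible outcome `Q'` maximizing
reported social welfare under the deviated profile, such that `u_i(Q') > u_i(Q)`
where `u_i` is computed from `i`'s truthful vote. -/
theorem pbpi_not_strategyproof_substitutes_only :
    ∃ (m r n B : ℕ) (z : Fin r → Finset (Fin m))
      (f : Fin n → Fin r → ℕ) (s : Fin n → Fin r → Finset (Fin m))
      (i : Fin n) (f' : Fin r → ℕ) (s' : Fin r → Finset (Fin m))
      (Q Q' : Finset (Fin m)),
      0 < B ∧
      -- the groups partition the project set
      (∀ g g' : Fin r, g ≠ g' → Disjoint (z g) (z g')) ∧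
      (Finset.univ.biUnion z = (Finset.univ : Finset (Fin m))) ∧
      -- the truthful votes and the deviation are admissible
      (∀ j g, s j g ⊆ z g) ∧ (∀ j, ∑ g, f j g ≤ B) ∧
      (∀ g, s' g ⊆ z g) ∧ (∑ g, f' g ≤ B) ∧
      -- `Q` maximizes reported social welfare among feasible outcomes, truthful profile
      Q.card ≤ B ∧
      (∀ R : Finset (Fin m), R.card ≤ B →
        (∑ j, overlapUtil (f j) (s j) R) ≤ ∑ j, overlapUtil (f j) (s j) Q) ∧
      -- `Q'` maximizes reported social welfare among feasible outcomes, deviated profile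
      Q'.card ≤ B ∧
      (∀ R : Finset (Fin m), R.card ≤ B →
        (∑ j, overlapUtil (Function.update f i f' j) (Function.update s i s' j) R) ≤
          ∑ j, overlapUtil (Function.update f i f' j) (Function.update s i s' j) Q') ∧
      -- voter `i` strictly benefits (utility computed from `i`'s truthful vote)
      overlapUtil (f i) (s i) Q < overlapUtil (f i) (s i) Q' := by
  obtain ⟨m, r, n, B, z, f, s, i, f', s', Q, Q', hB, hdisj, hcover, hs, hf, hs', hf', hQ, hQ',
    hgain⟩ := pbpi_not_strategyproof_substitutes_only_general
  exact ⟨m, r, n, B, z, f, s, i, f', s', Q, Q', hB, hdisj, hcover, hs, hf, hs', hf',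
    hQ.card_le, hQ.welfare_le, hQ'.card_le, hQ'.welfare_le, hgain⟩
end

section
/- In a special vote profile, replacing a funded lower-ranked substitute project by a higher-ranked one weakly increases social welfare: assume unit-cost projects, no complementarity answers, and a vote profile that is special (Definition 4). Let g be a substitutes group, let λ be one of its subgroups with strict total order ≻, and let p_h, p_l ∈ λ with p_h ≻ p_l. Then for every outcome Q ⊆ P with p_l ∈ Q and p_h ∉ Q, the social welfare satisfies U((Q \ {p_l}) ∪ {p_h}) ≥ U(Q). -/
/-!
In a special vote profile, replacing a funded lower-ranked substitute project by a
higher-ranked one of the same subgroup weakly increases social welfare.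
-/

open Finset

/-!
Definition 4 forces every voter who approves the lower-ranked project `pl` to approve `ph` as well.
So whenever the swap costs an approval set the project `pl`, it also gains it `ph`, and no
intersection `Q ∩ s i g` shrinks.
-/

theorem card_inter_le_card_insert_erase_inter {α : Type*} [DecidableEq α] {Q s : Finset α}
    {p q : α} (hqQ : q ∉ Q) (hpq : p ∈ s → q ∈ s) :
    #(Q ∩ s) ≤ #(insert q (Q.erase p) ∩ s) := by
  by_cases hp : p ∈ s
  · have hq : q ∉ (Q ∩ s).erase p := fun h => hqQ (mem_of_mem_inter_left (mem_of_mem_erase h))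
    calc #(Q ∩ s) ≤ #((Q ∩ s).erase p) + 1 := Nat.le_add_of_sub_le pred_card_le_card_erase
      _ = #(insert q ((Q ∩ s).erase p)) := (card_insert_of_notMem hq).symm
      _ = #(insert q (Q.erase p) ∩ s) := by rw [insert_inter_of_mem (hpq hp), erase_inter]
  · calc #(Q ∩ s) = #(Q.erase p ∩ s) := by
          rw [erase_inter, erase_eq_of_notMem fun h => hp (mem_of_mem_inter_right h)]
      _ ≤ #(insert q (Q.erase p) ∩ s) :=
          card_le_card (inter_subset_inter_right (subset_insert _ _))

theorem overlapUtil_le_overlapUtil_insert_erase {α : Type*} [DecidableEq α] {r : ℕ}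
    (f : Fin r → ℕ) {s : Fin r → Finset α} {Q : Finset α} {p q : α} (hqQ : q ∉ Q)
    (hpq : ∀ g, p ∈ s g → q ∈ s g) :
    overlapUtil f s Q ≤ overlapUtil f s (insert q (Q.erase p)) :=
  sum_le_sum fun g _ => min_le_min_left (f g) (card_inter_le_card_insert_erase_inter hqQ (hpq g))

/-- The condition of Definition 4 on an approval set `t` in a substitutes group with subgroups
`sub`: it is a top segment of a single subgroup. `higher q p` reads "`q` is ranked above `p`"; one
relation serves all subgroups, as only pairs inside a subgroup are compared. -/
def IsSubgroupTopSegment {α κ : Type*} (sub : κ → Set α) (higher : α → α → Prop)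
    (t : Set α) : Prop :=
  ∃ a, t ⊆ sub a ∧ ∀ p ∈ t, ∀ q ∈ sub a, higher q p → q ∈ t

theorem IsSubgroupTopSegment.mem_of_higher {α κ : Type*} {sub : κ → Set α}
    {higher : α → α → Prop} {t : Set α} (ht : IsSubgroupTopSegment sub higher t)
    (hsub : Pairwise fun a b => Disjoint (sub a) (sub b)) {a : κ} {p q : α}
    (hp : p ∈ sub a) (hq : q ∈ sub a) (hqp : higher q p) (hpt : p ∈ t) : q ∈ t := by
  obtain ⟨b, htb, hup⟩ := ht
  obtain rfl : b = a := hsub.eq (Set.not_disjoint_iff.2 ⟨p, htb hpt, hp⟩)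
  exact hup p hpt q hq hqp

theorem swap_higher_ranked_substitute_general {α ι κ : Type*} [DecidableEq α] [Fintype ι] {r : ℕ}
    {z : Fin r → Set α} (hz : Pairwise fun g g' => Disjoint (z g) (z g'))
    (f : ι → Fin r → ℕ) {s : ι → Fin r → Finset α} (hsz : ∀ i g, (s i g : Set α) ⊆ z g)
    {g : Fin r} {sub : κ → Set α} {higher : α → α → Prop}
    (hsub : Pairwise fun a b => Disjoint (sub a) (sub b)) (hsubz : ∀ a, sub a ⊆ z g)
    (hvoters : ∀ i, IsSubgroupTopSegment sub higher (s i g))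
    {a : κ} {ph pl : α} (hph : ph ∈ sub a) (hpl : pl ∈ sub a) (hrank : higher ph pl)
    {Q : Finset α} (hphQ : ph ∉ Q) :
    (∑ i, overlapUtil (f i) (s i) Q) ≤
      ∑ i, overlapUtil (f i) (s i) (insert ph (Q.erase pl)) := by
  have approves_higher : ∀ i g', pl ∈ s i g' → ph ∈ s i g' := by
    intro i g' hpls
    obtain rfl : g' = g := hz.eq (Set.not_disjoint_iff.2 ⟨pl, hsz i g' hpls, hsubz a hpl⟩)
    exact (hvoters i).mem_of_higher hsub hpl hph hrank hpls
  exact sum_le_sum fun i _ => overlapUtil_le_overlapUtil_insert_erase (f i) hphQ (approves_higher i)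

/-- Unit-cost projects, no complementarity, special vote profile:
`g` is a substitutes group, partitioned into subgroups `sub a` with strict total
orders (encoded by ranks `ord`, injective on each subgroup, smaller rank = ranked
higher); every voter's approval set in `g` lies in a single subgroup and is upward
closed for the rank. If `ph` and `pl` lie in the same subgroup with `ph` ranked above
`pl` (`ord ph < ord pl`), then for every outcome `Q` with `pl ∈ Q` and `ph ∉ Q`,
replacing `pl` by `ph` weakly increases social welfare:
`U Q ≤ U ((Q \ {pl}) ∪ {ph})`. -/
theorem swap_higher_ranked_substitute
    {α : Type*} [Fintype α] [DecidableEq α] (r n : ℕ)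
    (z : Fin r → Finset α)
    (hzdis : ∀ g g' : Fin r, g ≠ g' → Disjoint (z g) (z g'))
    (hzcov : Finset.univ.biUnion z = (Finset.univ : Finset α))
    (f : Fin n → Fin r → ℕ) (s : Fin n → Fin r → Finset α)
    (hsz : ∀ i g, s i g ⊆ z g)
    (g : Fin r) (k : ℕ) (sub : Fin k → Finset α) (ord : α → ℕ)
    (hsubdis : ∀ a b : Fin k, a ≠ b → Disjoint (sub a) (sub b))
    (hsubcov : Finset.univ.biUnion sub = z g)
    (hinj : ∀ a : Fin k, Set.InjOn ord (sub a : Set α))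
    (hvoters : ∀ i : Fin n, ∃ a : Fin k, s i g ⊆ sub a ∧
      ∀ p ∈ s i g, ∀ q ∈ sub a, ord q < ord p → q ∈ s i g)
    (a : Fin k) (ph pl : α) (hph : ph ∈ sub a) (hpl : pl ∈ sub a)
    (hrank : ord ph < ord pl)
    (Q : Finset α) (hplQ : pl ∈ Q) (hphQ : ph ∉ Q) :
    (∑ i, overlapUtil (f i) (s i) Q) ≤
      ∑ i, overlapUtil (f i) (s i) (insert ph (Q.erase pl)) :=
  swap_higher_ranked_substitute_general (z := fun g => z g) (s := s) (sub := fun b => sub b)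
    (higher := fun q p => ord q < ord p)
    (fun g g' h => disjoint_coe.2 (hzdis g g' h)) f hsz
    (fun b c h => disjoint_coe.2 (hsubdis b c h))
    (fun b => coe_subset.2 (hsubcov ▸ subset_biUnion_of_mem sub (mem_univ b)))
    (by simpa [IsSubgroupTopSegment] using hvoters) hph hpl hrank hphQ
end

section
/- Nested per-group optima extend to unions of groups: assume unit-cost projects and that all complementarity answers are 0 (so every voter's utility u_i(Q) = Σ_g min(f_g^i, |Q ∩ s_g^i|) is submodular). Suppose for each group g there exists a chain Q_g(0) ⊆ Q_g(1) ⊆ … ⊆ Q_g(|z_g|) with |Q_g(b)| = b such that Q_g(b) maximizes U among all size-b subsets of z_g. Then for every set of groups G ⊆ [r] there exists a chain Q_G(0) ⊆ Q_G(1) ⊆ … with |Q_G(b)| = b such that Q_G(b) maximizes U among all size-b subsets of ⋃_{g∈G} z_g. -/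
/-!
Nested per-group optima extend to unions of groups (unit costs, no complementarity).
-/

open Finset

/-!
Submodularity makes the optimal welfare `b ↦ U (Q_g b)` along a nested chain of optima concave:
the project entering the chain at step `q` has no larger marginal value there than at an earlier
step `p`, where adding it cannot beat the optimum `Q_g (p + 1)`. Since a voter's overlap with one
group does not depend on projects of another, optima over a union of two disjoint blocks come from
splitting the budget `b = i + j` so as to maximize `U (P i) + U (Q j)`. For concave sequences an
optimal split of `b` extends to an optimal split of `b + 1` by raising one of its two parts, so
the optimal splits, and with them the optimal sets, can be chosen nested. Groups are then added one
at a time.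
-/

section Splits

variable {M : Type*}

/-- The sequence `a` is concave on `{0, …, m}`: its increments do not increase. Stated without
subtraction, so that `M` need not be a group. -/
def ConcaveUpTo [Add M] [LE M] (m : ℕ) (a : ℕ → M) : Prop :=
  ∀ ⦃p q⦄, p ≤ q → q < m → a (q + 1) + a p ≤ a (p + 1) + a q

/-- `t` is an optimal way of splitting the budget `t.1 + t.2` between the value sequences `a` and
`c`, among the splits obeying the capacities `u`. -/
def IsBestSplit [Add M] [LE M] (a c : ℕ → M) (u t : ℕ × ℕ) : Prop :=
  t ≤ u ∧ ∀ t' ≤ u, t'.1 + t'.2 = t.1 + t.2 → a t'.1 + c t'.2 ≤ a t.1 + c t.2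

variable {a c : ℕ → M} {u t t' : ℕ × ℕ}

lemma IsBestSplit.swap [AddCommMagma M] [LE M] (h : IsBestSplit a c u t) :
    IsBestSplit c a u.swap t.swap := by
  refine ⟨Prod.swap_le_swap.2 h.1, fun t' ht' hsum => ?_⟩
  have key := h.2 t'.swap (Prod.swap_le_swap.2 ht') (by simpa [add_comm] using hsum)
  simpa [add_comm] using key

lemma exists_isBestSplit [Add M] [LinearOrder M] (a c : ℕ → M) {b : ℕ} (hb : b ≤ u.1 + u.2) :
    ∃ t, IsBestSplit a c u t ∧ t.1 + t.2 = b := by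
  have hne : {t ∈ antidiagonal b | t ≤ u}.Nonempty :=
    ⟨(min b u.1, b - min b u.1), mem_filter.2 ⟨HasAntidiagonal.mem_antidiagonal.2 (by grind),
      min_le_right _ _, by grind⟩⟩
  obtain ⟨t, ht, hmax⟩ := exists_max_image _ (fun t => a t.1 + c t.2) hne
  simp only [mem_filter, HasAntidiagonal.mem_antidiagonal] at ht hmax
  exact ⟨t, ⟨ht.2, fun t' ht' hsum => hmax t' ⟨hsum.trans ht.1, ht'⟩⟩, ht.1⟩

variable [AddCommMonoid M] [LinearOrder M] [IsOrderedCancelAddMonoid M]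

lemma IsBestSplit.le_raise_fst (h : IsBestSplit a c u t) (ha : ConcaveUpTo u.1 a)
    (ht' : t' ≤ u) (hsum : t'.1 + t'.2 = t.1 + t.2 + 1) (hlt : t.1 < t'.1) :
    a t'.1 + c t'.2 ≤ a (t.1 + 1) + c t.2 := by
  obtain ⟨x, y⟩ := t'
  obtain ⟨w, rfl⟩ : ∃ w, x = w + 1 := ⟨x - 1, by omega⟩
  have hconcave : a (w + 1) + a t.1 ≤ a (t.1 + 1) + a w := ha (Nat.le_of_lt_succ hlt) ht'.1
  have hbest : a w + c y ≤ a t.1 + c t.2 :=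
    h.2 (w, y) ⟨(Nat.le_succ w).trans ht'.1, ht'.2⟩ (by simp only at hsum ⊢; omega)
  refine le_of_add_le_add_right (a := a t.1 + a w) ?_
  calc a (w + 1) + c y + (a t.1 + a w)
      = (a (w + 1) + a t.1) + (a w + c y) := by abel
    _ ≤ (a (t.1 + 1) + a w) + (a t.1 + c t.2) := add_le_add hconcave hbest
    _ = a (t.1 + 1) + c t.2 + (a t.1 + a w) := by abel

lemma IsBestSplit.raise_fst (h : IsBestSplit a c u t) (ha : ConcaveUpTo u.1 a)
    (ht' : IsBestSplit a c u t') (hsum : t'.1 + t'.2 = t.1 + t.2 + 1) (hlt : t.1 < t'.1) :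
    IsBestSplit a c u (t.1 + 1, t.2) :=
  ⟨⟨hlt.trans_le ht'.1.1, h.1.2⟩, fun x hx hxsum =>
    (ht'.2 x hx (by simp only at hxsum; omega)).trans (h.le_raise_fst ha ht'.1 hsum hlt)⟩

lemma IsBestSplit.exists_succ (h : IsBestSplit a c u t) (ha : ConcaveUpTo u.1 a)
    (hc : ConcaveUpTo u.2 c) (hlt : t.1 + t.2 < u.1 + u.2) :
    ∃ t', t ≤ t' ∧ IsBestSplit a c u t' ∧ t'.1 + t'.2 = t.1 + t.2 + 1 := by
  obtain ⟨t', ht', hsum⟩ := exists_isBestSplit a c hlt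
  obtain hfst | hsnd : t.1 < t'.1 ∨ t.2 < t'.2 := by omega
  · exact ⟨(t.1 + 1, t.2), ⟨Nat.le_succ _, le_rfl⟩, h.raise_fst ha ht' hsum hfst,
      Nat.add_right_comm ..⟩
  · have hswap := h.swap.raise_fst hc ht'.swap (by simp only [Prod.fst_swap, Prod.snd_swap]; omega)
      hsnd
    exact ⟨(t.1, t.2 + 1), ⟨le_rfl, Nat.le_succ _⟩, hswap.swap, rfl⟩

lemma exists_monotone_isBestSplit (ha : ConcaveUpTo u.1 a) (hc : ConcaveUpTo u.2 c) :
    ∃ t : ℕ → ℕ × ℕ, Monotone t ∧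
      ∀ b, IsBestSplit a c u (t b) ∧ (b ≤ u.1 + u.2 → (t b).1 + (t b).2 = b) := by
  obtain ⟨t₀, ht₀, hsum₀⟩ := exists_isBestSplit (u := u) a c (Nat.zero_le _)
  have hstep (x : {t // IsBestSplit a c u t}) : ∃ y : {t // IsBestSplit a c u t},
      x.1 ≤ y.1 ∧ (x.1.1 + x.1.2 < u.1 + u.2 → y.1.1 + y.1.2 = x.1.1 + x.1.2 + 1) := by
    by_cases hlt : x.1.1 + x.1.2 < u.1 + u.2
    · obtain ⟨y, hle, hy, hsum⟩ := x.2.exists_succ ha hc hlt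
      exact ⟨⟨y, hy⟩, hle, fun _ => hsum⟩
    · exact ⟨x, le_rfl, fun h => absurd h hlt⟩
  choose next hle hsum using hstep
  let t (b : ℕ) : {t // IsBestSplit a c u t} := next^[b] ⟨t₀, ht₀⟩
  have ht (b : ℕ) : t (b + 1) = next (t b) := Function.iterate_succ_apply' ..
  refine ⟨fun b => (t b).1, monotone_nat_of_le_succ fun b => ht b ▸ hle (t b),
    fun b => ⟨(t b).2, fun hb => ?_⟩⟩
  induction b with
  | zero => exact hsum₀
  | succ b ih =>
    have hsum_b : (t b).1.1 + (t b).1.2 = b := ih (by omega)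
    simp only [ht]
    rw [hsum (t b) (by omega), hsum_b]

end Splits

section OptimalChains

variable {α M : Type*}

/-- Submodularity of a set function, in its lattice form. -/
def IsSubmodular [DecidableEq α] [Add M] [LE M] (U : Finset α → M) : Prop :=
  ∀ S T, U (S ∪ T) + U (S ∩ T) ≤ U S + U T

/-- No interaction between the blocks `A` and `B`: the value of a set inside `A ∪ B` is the sum of
the values of its parts. If `M` is cancellative, this forces `U ∅ = 0`. -/
def AdditiveAcross [DecidableEq α] [Add M] (U : Finset α → M) (A B : Finset α) : Prop :=
  ∀ R ⊆ A, ∀ S ⊆ B, U (R ∪ S) = U R + U S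

/-- `Q 0 ⊆ Q 1 ⊆ …` is a nested chain of subsets of `A` such that `Q b` maximizes `U` among the
subsets of `A` of size `b`. Beyond `b = #A` only `Q b ⊆ A` and nestedness are required. -/
def IsOptimalChain [LE M] (U : Finset α → M) (A : Finset α) (Q : ℕ → Finset α) : Prop :=
  (∀ b, Q b ⊆ A) ∧ (∀ b, Q b ⊆ Q (b + 1)) ∧
    ∀ b ≤ #A, #(Q b) = b ∧ ∀ R ⊆ A, #R = b → U R ≤ U (Q b)

variable {U : Finset α → M} {A B R : Finset α} {P Q : ℕ → Finset α}

lemma isOptimalChain_empty [Preorder M] (U : Finset α → M) : IsOptimalChain U ∅ fun _ => ∅ := by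
  refine ⟨fun _ => Subset.rfl, fun _ => Subset.rfl, fun b hb => ⟨?_, fun R hR _ => ?_⟩⟩
  · exact (Nat.le_zero.1 hb).symm
  · rw [subset_empty.1 hR]

lemma IsOptimalChain.monotone [LE M] (hQ : IsOptimalChain U A Q) : Monotone Q :=
  monotone_nat_of_le_succ hQ.2.1

lemma IsOptimalChain.card_eq [LE M] (hQ : IsOptimalChain U A Q) {b : ℕ} (hb : b ≤ #A) :
    #(Q b) = b :=
  (hQ.2.2 b hb).1

lemma IsOptimalChain.le_card [LE M] (hQ : IsOptimalChain U A Q) (hR : R ⊆ A) : U R ≤ U (Q #R) :=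
  (hQ.2.2 #R (card_le_card hR)).2 R hR rfl

lemma IsOptimalChain.exists_insert_eq_succ [DecidableEq α] [LE M] (hQ : IsOptimalChain U A Q)
    {b : ℕ} (hb : b < #A) :
    ∃ y ∈ A, y ∉ Q b ∧ insert y (Q b) = Q (b + 1) := by
  have hcard : #(Q b) + 1 = #(Q (b + 1)) := by rw [hQ.card_eq hb, hQ.card_eq hb.le]
  obtain ⟨y, hy, hins⟩ := exists_eq_insert_iff.2 ⟨hQ.2.1 b, hcard⟩
  exact ⟨y, hQ.1 (b + 1) (hins ▸ mem_insert_self y _), hy, hins⟩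

variable [DecidableEq α] [AddCommMonoid M] [LinearOrder M] [IsOrderedCancelAddMonoid M]

lemma IsOptimalChain.concaveUpTo (hU : IsSubmodular U) (hQ : IsOptimalChain U A Q) :
    ConcaveUpTo #A fun b => U (Q b) := by
  intro p q hpq hq
  obtain ⟨y, hyA, hyQ, hins⟩ := hQ.exists_insert_eq_succ hq
  have hsub : Q p ⊆ Q q := hQ.monotone hpq
  have hcard : #(insert y (Q p)) = p + 1 := by
    rw [card_insert_of_notMem fun h => hyQ (hsub h), hQ.card_eq (by omega)]
  calc U (Q (q + 1)) + U (Q p)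
      = U (insert y (Q p) ∪ Q q) + U (insert y (Q p) ∩ Q q) := by
        rw [insert_union, union_eq_right.2 hsub, hins, insert_inter_of_notMem hyQ,
          inter_eq_left.2 hsub]
    _ ≤ U (insert y (Q p)) + U (Q q) := hU _ _
    _ ≤ U (Q (p + 1)) + U (Q q) := by
        gcongr
        exact hcard ▸ hQ.le_card (insert_subset hyA (hQ.1 p))

lemma AdditiveAcross.exists_le_add (hadd : AdditiveAcross U A B) (hAB : Disjoint A B)
    (hP : IsOptimalChain U A P) (hQ : IsOptimalChain U B Q) (hR : R ⊆ A ∪ B) :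
    ∃ t ≤ (#A, #B), t.1 + t.2 = #R ∧ U R ≤ U (P t.1) + U (Q t.2) := by
  have hsplit : R ∩ A ∪ R ∩ B = R := by
    rw [← inter_union_distrib_left, inter_eq_left.2 hR]
  have hdisj : Disjoint (R ∩ A) (R ∩ B) := hAB.mono inter_subset_right inter_subset_right
  refine ⟨(#(R ∩ A), #(R ∩ B)),
    ⟨card_le_card inter_subset_right, card_le_card inter_subset_right⟩, ?_, ?_⟩
  · rw [← card_union_of_disjoint hdisj, hsplit]
  · calc U R = U (R ∩ A) + U (R ∩ B) := by
          rw [← hadd _ inter_subset_right _ inter_subset_right, hsplit]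
      _ ≤ U (P #(R ∩ A)) + U (Q #(R ∩ B)) :=
          add_le_add (hP.le_card inter_subset_right) (hQ.le_card inter_subset_right)

theorem IsOptimalChain.exists_union (hU : IsSubmodular U) (hAB : Disjoint A B)
    (hadd : AdditiveAcross U A B) (hP : IsOptimalChain U A P) (hQ : IsOptimalChain U B Q) :
    ∃ T, IsOptimalChain U (A ∪ B) T := by
  obtain ⟨t, ht_mono, ht⟩ := exists_monotone_isBestSplit (u := (#A, #B))
    (hP.concaveUpTo hU) (hQ.concaveUpTo hU)
  refine ⟨fun b => P (t b).1 ∪ Q (t b).2, fun b => union_subset_union (hP.1 _) (hQ.1 _),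
    fun b => union_subset_union (hP.monotone (ht_mono b.le_succ).1)
      (hQ.monotone (ht_mono b.le_succ).2), fun b hb => ?_⟩
  obtain ⟨hbest, hsum⟩ := ht b
  rw [card_union_of_disjoint hAB] at hb
  refine ⟨?_, fun R hR hRb => ?_⟩
  · rw [card_union_of_disjoint (hAB.mono (hP.1 _) (hQ.1 _)), hP.card_eq hbest.1.1,
      hQ.card_eq hbest.1.2, hsum hb]
  · obtain ⟨x, hx, hxsum, hle⟩ := hadd.exists_le_add hAB hP hQ hR
    calc U R ≤ U (P x.1) + U (Q x.2) := hle
      _ ≤ U (P (t b).1) + U (Q (t b).2) := hbest.2 x hx (by rw [hxsum, hRb, hsum hb])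
      _ = U (P (t b).1 ∪ Q (t b).2) := (hadd _ (hP.1 _) _ (hQ.1 _)).symm

theorem nested_group_optima_extend_to_unions_general {κ : Type*} {z : κ → Finset α}
    (hU : IsSubmodular U) (hdisj : Pairwise (Function.onFun Disjoint z))
    (hadd : ∀ g, ∀ G : Finset κ, g ∉ G → AdditiveAcross U (z g) (G.biUnion z)) (G : Finset κ)
    (hchains : ∀ g ∈ G, ∃ Q, IsOptimalChain U (z g) Q) :
    ∃ Q, IsOptimalChain U (G.biUnion z) Q := by
  classical
  induction G using Finset.induction_on with
  | empty => exact ⟨_, isOptimalChain_empty U⟩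
  | insert g G hg ih =>
    obtain ⟨P, hP⟩ := hchains g (mem_insert_self g G)
    obtain ⟨Q, hQ⟩ := ih fun h hh => hchains h (mem_insert_of_mem hh)
    have hgG : Disjoint (z g) (G.biUnion z) :=
      (disjoint_biUnion_right _ _ _).2 fun h hh => hdisj (ne_of_mem_of_not_mem hh hg).symm
    rw [biUnion_insert]
    exact hP.exists_union hU hgG (hadd g G hg) hQ

end OptimalChains

section OverlapUtility

variable {α ι : Type*} [DecidableEq α] [Fintype ι] {r : ℕ}

lemma isSubmodular_overlapUtil (f : Fin r → ℕ) (s : Fin r → Finset α) :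
    IsSubmodular (overlapUtil f s) := by
  intro S T
  simp only [overlapUtil, ← sum_add_distrib]
  refine sum_le_sum fun g _ => ?_
  have hmodular : #((S ∪ T) ∩ s g) + #(S ∩ T ∩ s g) = #(S ∩ s g) + #(T ∩ s g) := by
    rw [union_inter_distrib_right, inter_inter_distrib_right, card_union_add_card_inter]
  have hS : #(S ∩ s g) ≤ #((S ∪ T) ∩ s g) := by gcongr; exact subset_union_left
  have hT : #(T ∩ s g) ≤ #((S ∪ T) ∩ s g) := by gcongr; exact subset_union_right
  omega

lemma overlapUtil_union (f : Fin r → ℕ) {s : Fin r → Finset α} {R S : Finset α}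
    (h : ∀ g, Disjoint R (s g) ∨ Disjoint S (s g)) :
    overlapUtil f s (R ∪ S) = overlapUtil f s R + overlapUtil f s S := by
  simp only [overlapUtil, ← sum_add_distrib]
  refine sum_congr rfl fun g _ => ?_
  rw [union_inter_distrib_right]
  rcases h g with hg | hg <;> simp [disjoint_iff_inter_eq_empty.1 hg]

/-- The social welfare `U(Q) = Σ_i u_i(Q)` of the voters `i : ι`. -/
def welfare (f : ι → Fin r → ℕ) (s : ι → Fin r → Finset α) (Q : Finset α) : ℕ :=
  ∑ i, overlapUtil (f i) (s i) Q

lemma isSubmodular_welfare (f : ι → Fin r → ℕ) (s : ι → Fin r → Finset α) :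
    IsSubmodular (welfare f s) := by
  intro S T
  simp only [welfare, ← sum_add_distrib]
  exact sum_le_sum fun i _ => isSubmodular_overlapUtil (f i) (s i) S T

lemma additiveAcross_welfare {z : Fin r → Finset α} (hdisj : Pairwise (Function.onFun Disjoint z))
    (f : ι → Fin r → ℕ) {s : ι → Fin r → Finset α} (hs : ∀ i g, s i g ⊆ z g) (g : Fin r)
    (G : Finset (Fin r)) (hg : g ∉ G) :
    AdditiveAcross (welfare f s) (z g) (G.biUnion z) := by
  intro R hR S hS
  simp only [welfare, ← sum_add_distrib]
  refine sum_congr rfl fun i _ => overlapUtil_union (f i) fun h => ?_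
  obtain rfl | hne := eq_or_ne g h
  · right
    have hG : Disjoint (G.biUnion z) (z g) :=
      (disjoint_biUnion_left _ _ _).2 fun h hh => hdisj (ne_of_mem_of_not_mem hh hg)
    exact hG.mono hS (hs i g)
  · exact .inl ((hdisj hne).mono hR (hs i h))

end OverlapUtility

/-- Unit-cost projects, all complementarity answers 0. If for every
group `g` there is a nested chain `Qg 0 ⊆ Qg 1 ⊆ …` of subsets of `z g`, with
`|Qg b| = b`, such that `Qg b` maximizes social welfare among all size-`b` subsets of
`z g`, then for every set `G` of groups there is a nested chain `QG 0 ⊆ QG 1 ⊆ …` of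
subsets of `⋃_{g ∈ G} z g`, with `|QG b| = b`, such that `QG b` maximizes social
welfare among all size-`b` subsets of `⋃_{g ∈ G} z g`. -/
theorem nested_group_optima_extend_to_unions
    {α : Type*} [Fintype α] [DecidableEq α] (r n : ℕ)
    (z : Fin r → Finset α)
    (hzdis : ∀ g g' : Fin r, g ≠ g' → Disjoint (z g) (z g'))
    (hzcov : Finset.univ.biUnion z = (Finset.univ : Finset α))
    (f : Fin n → Fin r → ℕ) (s : Fin n → Fin r → Finset α)
    (hsz : ∀ i g, s i g ⊆ z g)
    (hchains : ∀ g : Fin r, ∃ Qg : ℕ → Finset α,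
      (∀ b, Qg b ⊆ z g) ∧ (∀ b, Qg b ⊆ Qg (b + 1)) ∧
      ∀ b ≤ (z g).card, (Qg b).card = b ∧
        ∀ R ⊆ z g, R.card = b →
          (∑ i, overlapUtil (f i) (s i) R) ≤ ∑ i, overlapUtil (f i) (s i) (Qg b)) :
    ∀ G : Finset (Fin r), ∃ QG : ℕ → Finset α,
      (∀ b, QG b ⊆ G.biUnion z) ∧ (∀ b, QG b ⊆ QG (b + 1)) ∧
      ∀ b ≤ (G.biUnion z).card, (QG b).card = b ∧
        ∀ R ⊆ G.biUnion z, R.card = b →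
          (∑ i, overlapUtil (f i) (s i) R) ≤ ∑ i, overlapUtil (f i) (s i) (QG b) := by
  intro G
  have hdisj : Pairwise (Function.onFun Disjoint z) := fun g g' => hzdis g g'
  exact nested_group_optima_extend_to_unions_general (isSubmodular_welfare f s) hdisj
    (additiveAcross_welfare hdisj f hsz) G fun g _ => hchains g
end
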